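/- In the (j,m)-balanced redistricting game with m > 14j, the first player can force a tie: Player 1 has a strategy guaranteeing that at least j of the 2j bins are majority-white. -/

import Mathlib

/-- A move in the `(j,m)`-balanced redistricting game: a color
(`true` = white, `false` = black) together with one of the `2*j` bins. -/
abbrev Move (j : ℕ) := Bool × Fin (2*j)

/-- A strategy: given the history of moves (most recent first), produce a move. -/
abbrev Strat (j : ℕ) := List (Move j) → Move j

/-- The history after `n` moves when Player 1 (moving at even steps) plays `s1`
and Player 2 plays `s2`.  Most recent move first. -/
def hist (j : ℕ) (s1 s2 : Strat j) : ℕ → List (Move j)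
  | 0 => []
  | n+1 =>
      (if n % 2 = 0 then s1 (hist j s1 s2 n) else s2 (hist j s1 s2 n)) :: hist j s1 s2 n

/-- A move `mv` is legal after history `h`: a ball of that color remains
(there are `j*(2*m+1)` balls of each color) and the chosen bin is not full
(each bin has capacity `2*m+1`). -/
def legalMove (j m : ℕ) (h : List (Move j)) (mv : Move j) : Prop :=
  h.countP (fun x => x.1 == mv.1) < j * (2*m+1) ∧
  h.countP (fun x => x.2 == mv.2) < 2*m+1

/-- Player 1 always plays legally throughout the `2*j*(2*m+1)` moves. -/
def p1Legal (j m : ℕ) (s1 s2 : Strat j) : Prop :=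
  ∀ n < 2*j*(2*m+1), n % 2 = 0 →
    legalMove j m (hist j s1 s2 n) (s1 (hist j s1 s2 n))

/-- Player 2 always plays legally throughout the `2*j*(2*m+1)` moves. -/
def p2Legal (j m : ℕ) (s1 s2 : Strat j) : Prop :=
  ∀ n < 2*j*(2*m+1), n % 2 = 1 →
    legalMove j m (hist j s1 s2 n) (s2 (hist j s1 s2 n))

/-- Number of white balls in bin `b` according to history `h`. -/
def whitesIn (j : ℕ) (h : List (Move j)) (b : Fin (2*j)) : ℕ :=
  h.countP (fun x => x.1 == true && x.2 == b)

/-- Number of black balls in bin `b` according to history `h`. -/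
def blacksIn (j : ℕ) (h : List (Move j)) (b : Fin (2*j)) : ℕ :=
  h.countP (fun x => x.1 == false && x.2 == b)

/-- The final history: all `2*j*(2*m+1)` balls have been placed. -/
def finalHist (j m : ℕ) (s1 s2 : Strat j) : List (Move j) :=
  hist j s1 s2 (2*j*(2*m+1))

/-- Number of majority-white bins (at least `m+1` white balls). -/
def majWhiteCount (j m : ℕ) (h : List (Move j)) : ℕ :=
  (Finset.univ.filter (fun b : Fin (2*j) => m+1 ≤ whitesIn j h b)).card

/-- Number of majority-black bins (at least `m+1` black balls). -/
def majBlackCount (j m : ℕ) (h : List (Move j)) : ℕ :=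
  (Finset.univ.filter (fun b : Fin (2*j) => m+1 ≤ blacksIn j h b)).card

/-!
Player 1 only ever places white balls. In the opening each bin is empty or strictly led by one
colour, more bins are led by white than by black, and Player 1 watches the potential
`Q = ∑ 2 * min w (m + 1) - ∑ w`, where `w` is the number of white balls in a bin, the first sum is
over the white-led bins and the second over all bins. Answering in the bin just played if it became
level or was opened with white, in an empty bin if Player 2 opened a bin with black, and otherwise
in an undecided white-led bin, Player 1 never lets `Q` drop and keeps it above the number of black
balls and at least the number of white-led bins. The only reply that could break the latter is
opening a new bin because all white-led bins are decided; but when the first bin is decided, `Q`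
plus the number of black balls is at least `m + 1`, so `Q ≥ j` from then on.

Once `j` bins are white-led, `Q ≥ j`. From there Player 1 plays only in these `j` bins, keeping them
led and `Q ≥ j`; as long as one of them is undecided, `Q ≥ j` also says that fewer than
`j * (2 * m + 1)` white balls have been used, so Player 1 can go on until all of them are decided.
-/

/-- A position of the game on bins `ι`: the numbers of white and of black balls in each bin. -/
@[ext]
structure Position (ι : Type*) where
  white : ι → ℕ
  black : ι → ℕ

/-- The indicator that a bin with `w` white and `b` black balls is led by white. -/
def whiteLead (w b : ℕ) : ℤ := if b < w then 1 else 0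

/-- The indicator that a bin with `w` white and `b` black balls is led by black. -/
def blackLead (w b : ℕ) : ℤ := if w < b then 1 else 0

/-- The contribution of a bin with `w` white and `b` black balls to Player 1's potential: white
balls count for Player 1 in a bin led by white, up to the `m + 1` needed to win it, and against
Player 1 elsewhere. -/
def surplus (m w b : ℕ) : ℤ := if b < w then 2 * (min w (m + 1) : ℕ) - w else -w

namespace Position

variable {ι : Type*} {j m : ℕ} {p : Position ι}

/-- The position after one more ball, white if `c` is `true` and black otherwise, in bin `x`. -/
@[simps]
def addBall [DecidableEq ι] (p : Position ι) (c : Bool) (x : ι) : Position ι where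
  white i := p.white i + if c = true ∧ x = i then 1 else 0
  black i := p.black i + if c = false ∧ x = i then 1 else 0

section AddBall

variable [DecidableEq ι] {c : Bool} {x i : ι}

theorem white_le_white_addBall : p.white i ≤ (p.addBall c x).white i :=
  Nat.le_add_right ..

theorem white_addBall_of_ne (h : i ≠ x) : (p.addBall c x).white i = p.white i := by
  simp [h.symm]

theorem black_addBall_of_ne (h : i ≠ x) : (p.addBall c x).black i = p.black i := by
  simp [h.symm]

theorem exists_mem_reply {A : Finset ι} (hlead : ∀ i ∈ A, p.black i < p.white i)
    (hundecided : ∃ y ∈ A, (p.addBall c x).white y ≤ m)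
    (hcap : (p.addBall c x).white x + (p.addBall c x).black x ≤ 2 * m + 1) :
    ∃ y ∈ A, (p.addBall c x).white y ≤ m ∧ (p.addBall c x).black y ≤ (p.addBall c x).white y ∧
      ∀ i ∈ A, i ≠ y → (p.addBall c x).black i < (p.addBall c x).white i := by
  have hrest (i) (hi : i ∈ A) (hix : i ≠ x) :
      (p.addBall c x).black i < (p.addBall c x).white i := by
    rw [white_addBall_of_ne hix, black_addBall_of_ne hix]
    exact hlead i hi
  by_cases hx : x ∈ A ∧ (p.addBall c x).white x ≤ (p.addBall c x).black x
  · obtain ⟨hxA, hle⟩ := hx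
    have hlt := hlead x hxA
    have hblack : (p.addBall c x).black x ≤ p.black x + 1 := by
      simp only [addBall_black]
      split_ifs <;> omega
    have hmono : p.white x ≤ (p.addBall c x).white x := white_le_white_addBall
    exact ⟨x, hxA, by omega, by omega, hrest⟩
  · have hall (i) (hi : i ∈ A) : (p.addBall c x).black i < (p.addBall c x).white i := by
      rcases eq_or_ne i x with rfl | hix
      · exact not_le.mp fun hle ↦ hx ⟨hi, hle⟩
      · exact hrest i hi hix
    obtain ⟨y, hyA, hy⟩ := hundecided
    exact ⟨y, hyA, hy, (hall y hyA).le, fun i hi _ ↦ hall i hi⟩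

theorem sum_min_white_addBall_of_mem {A : Finset ι} {y : ι} (hyA : y ∈ A) (hy : p.white y ≤ m) :
    ∑ i ∈ A, 2 * min ((p.addBall true y).white i) (m + 1) =
      ∑ i ∈ A, 2 * min (p.white i) (m + 1) + 2 := by
  rw [← Finset.add_sum_erase _ _ hyA, ← Finset.add_sum_erase A (fun i ↦ 2 * min (p.white i) _) hyA,
    Finset.sum_congr rfl fun i hi ↦ by rw [white_addBall_of_ne (Finset.ne_of_mem_erase hi)]]
  simp only [addBall_white, and_self, if_true]
  omega

end AddBall

theorem sum_min_white_add_two_le {A : Finset ι} {y : ι} (hyA : y ∈ A) (hy : p.white y ≤ m) :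
    ∑ i ∈ A, 2 * min (p.white i) (m + 1) + 2 ≤ A.card * (2 * (m + 1)) := by
  classical
  rw [← sum_min_white_addBall_of_mem hyA hy, ← smul_eq_mul]
  exact Finset.sum_le_card_nsmul _ _ _ fun i _ ↦ by omega

variable [Fintype ι]

/-- The sum over all bins of a quantity `f w b` depending on the numbers of white and black balls
in the bin. -/
def total (p : Position ι) (f : ℕ → ℕ → ℤ) : ℤ := ∑ i, f (p.white i) (p.black i)

/-- At least `j` bins are decided for white, so that Player 1 has already forced the tie. -/
def Won (j m : ℕ) (p : Position ι) : Prop :=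
  j ≤ (Finset.univ.filter fun i ↦ m + 1 ≤ p.white i).card

/-- The invariant of the second phase: `A` consists of `j` bins led by white, which Player 1 is
going to win, and the potential, with `A` in place of the set of all bins led by white, is at
least `j`. -/
def Closing (j m : ℕ) (p : Position ι) : Prop :=
  ∃ A : Finset ι, A.card = j ∧ (∀ i ∈ A, p.black i < p.white i) ∧
    ∑ i, p.white i + j ≤ ∑ i ∈ A, 2 * min (p.white i) (m + 1)

/-- The invariant of the first phase, in which Player 1 is still collecting the `j` bins to win. -/
structure Opening (j m : ℕ) (p : Position ι) : Prop where
  white_eq_zero_of_tie : ∀ i, p.white i = p.black i → p.white i = 0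
  blackLead_lt_whiteLead : p.total blackLead < p.total whiteLead
  whiteLead_le : p.total whiteLead ≤ j
  whiteLead_le_surplus : p.total whiteLead ≤ p.total (surplus m)
  black_lt_surplus : ((∑ i, p.black i : ℕ) : ℤ) < p.total (surplus m)
  le_surplus_or_white_le : (j : ℤ) ≤ p.total (surplus m) ∨ ∀ i, p.white i ≤ m

/-- The positions at Player 2's turn from which Player 1 is able to force the tie. -/
def Safe (j m : ℕ) (p : Position ι) : Prop :=
  p.Won j m ∨ p.Closing j m ∨ p.Opening j m

/-- The bookkeeping of one round leading from `p` to `q`: the inequalities between the changes of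
the totals which carry `Opening` over from `p` to `q`. -/
structure Progress (m : ℕ) (p q : Position ι) : Prop where
  whiteLead_le : q.total whiteLead ≤ p.total whiteLead + 1
  blackLead_le : q.total blackLead - p.total blackLead ≤ q.total whiteLead - p.total whiteLead
  black_mono : ∑ i, p.black i ≤ ∑ i, q.black i
  black_le : ((∑ i, q.black i : ℕ) : ℤ) - (∑ i, p.black i : ℕ) ≤
    q.total (surplus m) - p.total (surplus m)
  whiteLead_le_surplus_or : q.total whiteLead - p.total whiteLead ≤
    q.total (surplus m) - p.total (surplus m) ∨ ∃ d, m < q.white d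

theorem total_nonneg {f : ℕ → ℕ → ℤ} (hf : ∀ w b, 0 ≤ f w b) : 0 ≤ p.total f :=
  Finset.sum_nonneg fun _ _ ↦ hf _ _

theorem total_blackLead_nonneg : 0 ≤ p.total blackLead :=
  total_nonneg fun w b ↦ by unfold blackLead; split_ifs <;> simp

theorem sum_white_add_surplus_le :
    ((∑ i, p.white i : ℕ) : ℤ) + p.total (surplus m) ≤ 2 * (m + 1) * p.total whiteLead := by
  simp only [total, Nat.cast_sum, Finset.mul_sum, ← Finset.sum_add_distrib]
  refine Finset.sum_le_sum fun i _ ↦ ?_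
  unfold surplus whiteLead
  split_ifs <;> omega

theorem exists_led_of_total_whiteLead_pos (h : 0 < p.total whiteLead) :
    ∃ i, p.black i < p.white i := by
  obtain ⟨i, -, hi⟩ := Finset.exists_lt_of_sum_lt
    (show ∑ _i : ι, (0 : ℤ) < p.total whiteLead by simpa using h)
  refine ⟨i, ?_⟩
  by_contra hle
  simp [whiteLead, hle] at hi

section Totals

variable [DecidableEq ι] {c : Bool} {x y : ι}

theorem total_addBall (p : Position ι) (c : Bool) (x : ι) (f : ℕ → ℕ → ℤ) :
    (p.addBall c x).total f = p.total f +
      (f ((p.addBall c x).white x) ((p.addBall c x).black x) - f (p.white x) (p.black x)) := by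
  have hrest : ∑ i ∈ Finset.univ.erase x, f ((p.addBall c x).white i) ((p.addBall c x).black i) =
      ∑ i ∈ Finset.univ.erase x, f (p.white i) (p.black i) :=
    Finset.sum_congr rfl fun i hi ↦ by
      rw [white_addBall_of_ne (Finset.ne_of_mem_erase hi),
        black_addBall_of_ne (Finset.ne_of_mem_erase hi)]
  simp only [total, ← Finset.add_sum_erase _ _ (Finset.mem_univ x), hrest]
  ring

theorem total_addBall_addBall_self (p : Position ι) (c : Bool) (x : ι) (f : ℕ → ℕ → ℤ) :
    ((p.addBall c x).addBall true x).total f = p.total f +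
      (f (p.white x + c.toNat + 1) (p.black x + (!c).toNat) - f (p.white x) (p.black x)) := by
  rw [total_addBall, total_addBall]
  cases c <;> simp <;> ring

theorem sum_white_addBall (p : Position ι) (c : Bool) (x : ι) :
    ∑ i, (p.addBall c x).white i = ∑ i, p.white i + c.toNat := by
  cases c <;> simp [Finset.sum_add_distrib]

theorem sum_black_addBall (p : Position ι) (c : Bool) (x : ι) :
    ∑ i, (p.addBall c x).black i = ∑ i, p.black i + (!c).toNat := by
  cases c <;> simp [Finset.sum_add_distrib]

theorem total_addBall_of_empty (hw : p.white y = 0) (hb : p.black y = 0) :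
    (p.addBall true y).total whiteLead = p.total whiteLead + 1 ∧
    (p.addBall true y).total blackLead = p.total blackLead ∧
    (p.addBall true y).total (surplus m) = p.total (surplus m) + 1 := by
  simp [total_addBall, hw, hb, whiteLead, blackLead, surplus]

theorem total_addBall_of_led (hlead : p.black y < p.white y) (hw : p.white y ≤ m) :
    (p.addBall true y).total whiteLead = p.total whiteLead ∧
    (p.addBall true y).total blackLead = p.total blackLead ∧
    (p.addBall true y).total (surplus m) = p.total (surplus m) + 1 := by
  simp only [total_addBall, addBall_white, addBall_black, whiteLead, blackLead, surplus]
  refine ⟨?_, ?_, ?_⟩ <;> grind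

theorem total_addBall_of_not_tie (htie : (p.addBall c x).white x ≠ (p.addBall c x).black x)
    (hne : p.white x ≠ p.black x) :
    (p.addBall c x).total whiteLead = p.total whiteLead ∧
    (p.addBall c x).total blackLead = p.total blackLead ∧
    p.total (surplus m) + (!c).toNat ≤ (p.addBall c x).total (surplus m) + 1 := by
  simp only [total_addBall, addBall_white, addBall_black, whiteLead, blackLead, surplus] at htie ⊢
  cases c <;> grind

end Totals

theorem exists_empty_ne (htie : ∀ i, p.white i = p.black i → p.white i = 0)
    (hcard : p.total whiteLead + p.total blackLead + 1 < Fintype.card ι) (x : ι) :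
    ∃ y, y ≠ x ∧ p.white y = 0 ∧ p.black y = 0 := by
  classical
  by_contra! hcon
  have hled (i : ι) : (1 : ℤ) ≤ whiteLead (p.white i) (p.black i) +
      blackLead (p.white i) (p.black i) + if i = x then 1 else 0 := by
    have := htie i
    have := hcon i
    unfold whiteLead blackLead
    grind
  have hsum := Finset.sum_le_sum fun i (_ : i ∈ Finset.univ) ↦ hled i
  simp only [Finset.sum_add_distrib, Finset.sum_const, Finset.card_univ, nsmul_eq_mul, mul_one,
    Finset.sum_ite_eq', Finset.mem_univ, if_true] at hsum
  exact hcard.not_ge hsum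

theorem le_total_surplus_of_decided {d : ι} (hj : 2 * j ≤ m + 3)
    (hblack : ((∑ i, p.black i : ℕ) : ℤ) < p.total (surplus m))
    (hcap : ∀ i, p.white i + p.black i ≤ 2 * m + 1) (hle : ∀ i, p.white i ≤ m + 1)
    (hd : m < p.white d) : (j : ℤ) ≤ p.total (surplus m) := by
  have hnonneg (i : ι) : 0 ≤ surplus m (p.white i) (p.black i) + p.black i := by
    have := hle i
    unfold surplus
    split_ifs <;> omega
  have hdecided : (m : ℤ) + 1 ≤ surplus m (p.white d) (p.black d) + p.black d := by
    have := hle d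
    have := hcap d
    unfold surplus
    split_ifs <;> omega
  have hsum : surplus m (p.white d) (p.black d) + p.black d ≤
      p.total (surplus m) + (∑ i, p.black i : ℕ) := by
    rw [total, Nat.cast_sum, ← Finset.sum_add_distrib]
    exact Finset.single_le_sum (fun i _ ↦ hnonneg i) (Finset.mem_univ d)
  omega

theorem Opening.closing (h : p.Opening j m) (hL : p.total whiteLead = j) : p.Closing j m := by
  refine ⟨Finset.univ.filter fun i ↦ p.black i < p.white i, ?_, by simp, ?_⟩
  · simpa [total, whiteLead] using hL
  · have hsurplus : p.total (surplus m) =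
        ∑ i with p.black i < p.white i, 2 * ((min (p.white i) (m + 1) : ℕ) : ℤ) -
          ∑ i, (p.white i : ℤ) := by
      rw [total, Finset.sum_filter, ← Finset.sum_sub_distrib]
      refine Finset.sum_congr rfl fun i _ ↦ ?_
      unfold surplus
      split_ifs <;> simp
    have hle := h.whiteLead_le_surplus
    rw [hL, hsurplus, le_sub_iff_add_le'] at hle
    exact_mod_cast hle

theorem Opening.of_progress {q : Position ι} (h : p.Opening j m) (hL : p.total whiteLead < j)
    (hj : 2 * j ≤ m + 3) (hpq : p.Progress m q)
    (htie : ∀ i, q.white i = q.black i → q.white i = 0)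
    (hcap : ∀ i, q.white i + q.black i ≤ 2 * m + 1)
    (hle : (∀ i, p.white i ≤ m) → ∀ i, q.white i ≤ m + 1) : q.Opening j m := by
  obtain ⟨-, hK, -, hLQ, hB, hD⟩ := h
  obtain ⟨gL, gK, gB, gBQ, gLQ⟩ := hpq
  have hB' : ((∑ i, q.black i : ℕ) : ℤ) < q.total (surplus m) := by omega
  have hD' : (j : ℤ) ≤ q.total (surplus m) ∨ ∀ i, q.white i ≤ m := by
    by_contra! hcon
    obtain ⟨hQ, d, hd⟩ := hcon
    have hsmall : ∀ i, p.white i ≤ m := hD.resolve_left (by omega)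
    exact hQ.not_ge (le_total_surplus_of_decided hj hB' hcap (hle hsmall) hd)
  refine ⟨htie, by omega, by omega, ?_, hB', hD'⟩
  rcases gLQ with hLQ' | ⟨d, hd⟩
  · omega
  · have := hD'.resolve_right fun hle ↦ (hle d).not_gt hd
    omega

section Round

variable [DecidableEq ι] {c : Bool} {x : ι}

/-- In bin `y` Player 1 can legally answer with a white ball, keeping the position safe. -/
def IsReply (j m : ℕ) (p : Position ι) (y : ι) : Prop :=
  ∑ i, p.white i < j * (2 * m + 1) ∧ p.white y + p.black y < 2 * m + 1 ∧
    (p.addBall true y).Safe j m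

theorem progress_of_tie (htie : (p.addBall c x).white x = (p.addBall c x).black x)
    (hx : (p.addBall c x).white x ≤ m) :
    p.Progress m ((p.addBall c x).addBall true x) := by
  simp only [addBall_white, addBall_black] at htie hx
  refine ⟨?_, ?_, ?_, ?_, .inl ?_⟩ <;>
    simp only [sum_black_addBall, total_addBall_addBall_self, whiteLead, blackLead, surplus] <;>
    cases c <;> grind

theorem progress_of_empty_white (hm : 0 < m) (hw : p.white x = 0) (hb : p.black x = 0) :
    p.Progress m ((p.addBall true x).addBall true x) := by
  refine ⟨?_, ?_, ?_, ?_, .inl ?_⟩ <;>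
    simp only [sum_black_addBall, total_addBall_addBall_self, hw, hb, whiteLead, blackLead,
      surplus] <;>
    grind

theorem progress_of_empty_black {y : ι} (hw : p.white x = 0) (hb : p.black x = 0)
    (hwy : (p.addBall false x).white y = 0) (hby : (p.addBall false x).black y = 0) :
    p.Progress m ((p.addBall false x).addBall true y) := by
  obtain ⟨eL, eK, eQ⟩ := total_addBall_of_empty (m := m) hwy hby
  constructor <;> simp only [eL, eK, eQ, sum_black_addBall, total_addBall p] <;>
    simp [hw, hb, whiteLead, blackLead, surplus]

theorem progress_of_led {y : ι} (hne : p.white x ≠ p.black x)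
    (htie : (p.addBall c x).white x ≠ (p.addBall c x).black x)
    (hy : (p.addBall c x).black y < (p.addBall c x).white y) (hwy : (p.addBall c x).white y ≤ m) :
    p.Progress m ((p.addBall c x).addBall true y) := by
  obtain ⟨eL, eK, eQ⟩ := total_addBall_of_led hy hwy
  obtain ⟨eL', eK', eQ'⟩ := total_addBall_of_not_tie (m := m) htie hne
  constructor <;> simp only [eL, eK, eQ, eL', eK', sum_black_addBall] <;> grind

theorem progress_of_decided {y d : ι} (hne : p.white x ≠ p.black x)
    (htie : (p.addBall c x).white x ≠ (p.addBall c x).black x)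
    (hwy : (p.addBall c x).white y = 0) (hby : (p.addBall c x).black y = 0)
    (hd : m < (p.addBall c x).white d) :
    p.Progress m ((p.addBall c x).addBall true y) := by
  obtain ⟨eL, eK, eQ⟩ := total_addBall_of_empty (m := m) hwy hby
  obtain ⟨eL', eK', eQ'⟩ := total_addBall_of_not_tie (m := m) htie hne
  refine ⟨?_, ?_, ?_, ?_, .inr ⟨d, hd.trans_le white_le_white_addBall⟩⟩ <;>
    simp only [eL, eK, eQ, eL', eK', sum_black_addBall] <;> grind

theorem Opening.exists_progress (h : p.Opening j m) (hL : p.total whiteLead < j) (hm : 0 < m)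
    (hι : 2 * j ≤ Fintype.card ι)
    (hcap : (p.addBall c x).white x + (p.addBall c x).black x ≤ 2 * m + 1) :
    ∃ y, (p.addBall c x).white y ≤ m ∧ (p.addBall c x).black y ≤ (p.addBall c x).white y ∧
      ((p.addBall c x).white x = (p.addBall c x).black x → y = x) ∧
      p.Progress m ((p.addBall c x).addBall true y) := by
  have hK := h.blackLead_lt_whiteLead
  obtain ⟨e, hex, hwe, hbe⟩ := exists_empty_ne h.white_eq_zero_of_tie (by omega) x
  have hwe' : (p.addBall c x).white e = 0 := (white_addBall_of_ne hex).trans hwe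
  have hbe' : (p.addBall c x).black e = 0 := (black_addBall_of_ne hex).trans hbe
  by_cases htie : (p.addBall c x).white x = (p.addBall c x).black x
  · have hx : (p.addBall c x).white x ≤ m := by omega
    exact ⟨x, hx, htie.ge, fun _ ↦ rfl, progress_of_tie htie hx⟩
  by_cases hempty : p.white x = p.black x
  · have hw := h.white_eq_zero_of_tie x hempty
    have hb := hempty.symm.trans hw
    cases c
    · exact ⟨e, by omega, by omega, fun h ↦ absurd h htie,
        progress_of_empty_black hw hb hwe' hbe'⟩
    · exact ⟨x, by simpa [hw], by simp [hw, hb], fun _ ↦ rfl, progress_of_empty_white hm hw hb⟩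
  by_cases hled : ∃ y, (p.addBall c x).black y < (p.addBall c x).white y ∧
      (p.addBall c x).white y ≤ m
  · obtain ⟨y, hy, hwy⟩ := hled
    exact ⟨y, hwy, hy.le, fun h ↦ absurd h htie, progress_of_led hempty htie hy hwy⟩
  · push Not at hled
    have hLpos : 0 < (p.addBall c x).total whiteLead := by
      have := p.total_blackLead_nonneg
      rw [(total_addBall_of_not_tie (m := m) htie hempty).1]
      omega
    obtain ⟨d, hd⟩ := exists_led_of_total_whiteLead_pos hLpos
    exact ⟨e, by omega, by omega, fun h ↦ absurd h htie,
      progress_of_decided hempty htie hwe' hbe' (hled d hd)⟩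

theorem Opening.sum_white_addBall_lt (h : p.Opening j m) (hL : p.total whiteLead < j)
    (hj : j ≤ 2 * m + 1) : ∑ i, (p.addBall c x).white i < j * (2 * m + 1) := by
  have hc : c.toNat ≤ 1 := c.toNat_le
  have hQ : 0 < p.total (surplus m) := (Int.natCast_nonneg _).trans_lt h.black_lt_surplus
  have hbound : (2 * (m + 1) : ℤ) * p.total whiteLead ≤ 2 * (m + 1) * (j - 1) :=
    mul_le_mul_of_nonneg_left (by omega) (by positivity)
  have := p.sum_white_add_surplus_le (m := m)
  rw [sum_white_addBall]
  zify at *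
  linarith

theorem Opening.exists_isReply (h : p.Opening j m) (hL : p.total whiteLead < j)
    (hj : 2 * j ≤ m + 3) (hι : 2 * j ≤ Fintype.card ι)
    (hcap : ∀ i, (p.addBall c x).white i + (p.addBall c x).black i ≤ 2 * m + 1) :
    ∃ y, (p.addBall c x).IsReply j m y := by
  have hj' : 2 ≤ j := by
    have := h.blackLead_lt_whiteLead
    have := p.total_blackLead_nonneg
    omega
  obtain ⟨y, hwy, hby, htie, hprog⟩ := h.exists_progress hL (by omega) hι (hcap x)
  refine ⟨y, h.sum_white_addBall_lt hL (by omega), by omega,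
    .inr <| .inr <| h.of_progress hL hj hprog (fun i hi ↦ ?_) (fun i ↦ ?_) fun hle i ↦ ?_⟩
  · have := h.white_eq_zero_of_tie i
    grind [addBall_white, addBall_black]
  · have := hcap i
    grind [addBall_white, addBall_black]
  · have := hle i
    grind [addBall_white, addBall_black]

theorem Closing.exists_isReply (h : p.Closing j m)
    (hcap : ∀ i, (p.addBall c x).white i + (p.addBall c x).black i ≤ 2 * m + 1)
    (hwon : ¬(p.addBall c x).Won j m) : ∃ y, (p.addBall c x).IsReply j m y := by
  obtain ⟨A, hA, hlead, hsum⟩ := h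
  have hundecided : ∃ y ∈ A, (p.addBall c x).white y ≤ m := by
    by_contra! hdecided
    exact hwon (hA.symm.le.trans (Finset.card_le_card fun i hi ↦ by simpa using hdecided i hi))
  obtain ⟨y, hyA, hwy, hby, hothers⟩ := exists_mem_reply hlead hundecided (hcap x)
  have hmin : ∑ i ∈ A, 2 * min (p.white i) (m + 1) ≤
      ∑ i ∈ A, 2 * min ((p.addBall c x).white i) (m + 1) :=
    Finset.sum_le_sum fun i _ ↦ by gcongr; exact white_le_white_addBall
  have hwhite : ∑ i, (p.addBall c x).white i ≤ ∑ i, p.white i + 1 := by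
    rw [sum_white_addBall]
    gcongr
    exact c.toNat_le
  have hroom := sum_min_white_add_two_le hyA hwy
  rw [hA] at hroom
  refine ⟨y, by linarith, by omega, .inr <| .inl ⟨A, hA, fun i hi ↦ ?_, ?_⟩⟩
  · rcases eq_or_ne i y with rfl | hiy
    · simpa [Nat.lt_succ_iff] using hby
    · rw [white_addBall_of_ne hiy, black_addBall_of_ne hiy]
      exact hothers i hi hiy
  · rw [sum_min_white_addBall_of_mem hyA hwy, sum_white_addBall, Bool.toNat_true]
    omega

theorem Won.addBall (h : p.Won j m) (c : Bool) (x : ι) : (p.addBall c x).Won j m :=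
  h.trans <| Finset.card_le_card <| Finset.monotone_filter_right _ fun _ _ hi ↦
    le_trans hi white_le_white_addBall

theorem Safe.won_or_exists_isReply (h : p.Safe j m) (hj : 2 * j ≤ m + 3)
    (hι : 2 * j ≤ Fintype.card ι)
    (hcap : ∀ i, (p.addBall c x).white i + (p.addBall c x).black i ≤ 2 * m + 1) :
    (p.addBall c x).Won j m ∨ ∃ y, (p.addBall c x).IsReply j m y := by
  refine or_iff_not_imp_left.mpr fun hwon ↦ ?_
  rcases h with h | h | h
  · exact absurd (h.addBall c x) hwon
  · exact h.exists_isReply hcap hwon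
  · rcases h.whiteLead_le.lt_or_eq with hL | hL
    · exact h.exists_isReply hL hj hι hcap
    · exact (h.closing hL).exists_isReply hcap hwon

theorem isReply_of_empty (hj : 0 < j) (hjm : 2 * j ≤ m + 3) (hw : p.white = 0)
    (hb : p.black = 0) (y : ι) : p.IsReply j m y := by
  obtain ⟨eL, eK, eQ⟩ := total_addBall_of_empty (m := m) (congrFun hw y) (congrFun hb y)
  have htotal {f : ℕ → ℕ → ℤ} (hf : f 0 0 = 0) : p.total f = 0 := by simp [total, hw, hb, hf]
  rw [htotal (by simp [whiteLead])] at eL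
  rw [htotal (by simp [blackLead])] at eK
  rw [htotal (by simp [surplus])] at eQ
  refine ⟨by simpa [hw], by simp [hw, hb], .inr <| .inr ⟨by simp [hb], by omega, by omega,
    by omega, by simp [eQ, hb], ?_⟩⟩
  by_cases hm : m = 0
  · omega
  · refine .inr fun i ↦ ?_
    simp only [addBall_white, hw, Pi.zero_apply]
    split_ifs <;> omega

end Round

end Position

section History

variable {j m : ℕ} {h : List (Move j)} {mv : Move j}

/-- The position reached by a history. -/
def position (h : List (Move j)) : Position (Fin (2 * j)) := ⟨whitesIn j h, blacksIn j h⟩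

/-- A history respecting the supply of balls of each colour and the capacity of each bin. -/
def Feasible (m : ℕ) (h : List (Move j)) : Prop :=
  (∀ c, h.countP (fun x ↦ x.1 == c) ≤ j * (2 * m + 1)) ∧
    ∀ b, h.countP (fun x ↦ x.2 == b) ≤ 2 * m + 1

theorem position_cons (h : List (Move j)) (mv : Move j) :
    position (mv :: h) = (position h).addBall mv.1 mv.2 := by
  ext i <;> simp [position, whitesIn, blacksIn, List.countP_cons]

theorem feasible_nil : Feasible m ([] : List (Move j)) := by
  simp [Feasible]

theorem Feasible.cons (hh : Feasible m h) (hmv : legalMove j m h mv) : Feasible m (mv :: h) := by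
  constructor
  · intro c
    by_cases hc : mv.1 = c
    · subst hc
      simpa using hmv.1
    · simpa [hc] using hh.1 c
  · intro b
    by_cases hb : mv.2 = b
    · subst hb
      simpa using hmv.2
    · simpa [hb] using hh.2 b

theorem sum_countP_and_beq {α β : Type*} [Fintype β] [DecidableEq β] (p : α → Bool) (f : α → β)
    (l : List α) : ∑ b, l.countP (fun a ↦ p a && f a == b) = l.countP p := by
  induction l with
  | nil => simp
  | cons a l ih =>
    simp only [List.countP_cons, Finset.sum_add_distrib, ih]
    cases p a <;> simp

theorem sum_countP_beq {α β : Type*} [Fintype β] [DecidableEq β] (f : α → β) (l : List α) :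
    ∑ b, l.countP (fun a ↦ f a == b) = l.length := by
  simpa using sum_countP_and_beq (fun _ ↦ true) f l

theorem countP_color_true (h : List (Move j)) :
    h.countP (fun x ↦ x.1 == true) = ∑ i, (position h).white i :=
  (sum_countP_and_beq _ Prod.snd h).symm

theorem countP_bin (h : List (Move j)) (b : Fin (2 * j)) :
    h.countP (fun x ↦ x.2 == b) = (position h).white b + (position h).black b := by
  rw [← sum_countP_and_beq _ Prod.fst h, Fintype.sum_bool]
  simp only [position, whitesIn, blacksIn, Bool.and_comm]

theorem Feasible.white_add_black_le (hh : Feasible m h) (i : Fin (2 * j)) :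
    (position h).white i + (position h).black i ≤ 2 * m + 1 :=
  countP_bin h i ▸ hh.2 i

theorem Feasible.sum_white_eq_of_length (hh : Feasible m h)
    (hlen : h.length = 2 * j * (2 * m + 1)) : ∑ i, (position h).white i = j * (2 * m + 1) := by
  have hsum : h.countP (fun x ↦ x.1 == true) + h.countP (fun x ↦ x.1 == false) = h.length :=
    (Fintype.sum_bool _).symm.trans (sum_countP_beq Prod.fst h)
  have htrue := hh.1 true
  have hfalse := hh.1 false
  rw [hlen, mul_assoc] at hsum
  rw [← countP_color_true]
  omega

theorem exists_legalMove_of_length_lt (hlen : h.length < 2 * j * (2 * m + 1)) :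
    ∃ mv, legalMove j m h mv := by
  obtain ⟨c, -, hc⟩ : ∃ c ∈ Finset.univ, h.countP (fun x ↦ x.1 == c) < j * (2 * m + 1) :=
    Finset.exists_lt_of_sum_lt <| by
      rwa [sum_countP_beq, Finset.sum_const, smul_eq_mul, Finset.card_univ, Fintype.card_bool,
        ← mul_assoc]
  obtain ⟨b, -, hb⟩ : ∃ b ∈ Finset.univ, h.countP (fun x ↦ x.2 == b) < 2 * m + 1 :=
    Finset.exists_lt_of_sum_lt <| by
      rwa [sum_countP_beq, Finset.sum_const, smul_eq_mul, Finset.card_univ, Fintype.card_fin]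
  exact ⟨(c, b), hc, hb⟩

theorem length_hist (s1 s2 : Strat j) (n : ℕ) : (hist j s1 s2 n).length = n := by
  induction n with
  | zero => rfl
  | succ n ih => simp [hist, ih]

theorem exists_strat_of_invariant (hj : 0 < j) {P I : List (Move j) → Prop} (h_nil : P [])
    (h_move : ∀ h, P h → h.length < 2 * j * (2 * m + 1) → ∃ mv, legalMove j m h mv ∧ I (mv :: h))
    (h_reply : ∀ h mv, I h → legalMove j m h mv → P (mv :: h)) :
    ∃ s1 : Strat j, ∀ s2 : Strat j,
      p2Legal j m s1 s2 → p1Legal j m s1 s2 ∧ P (finalHist j m s1 s2) := by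
  have hmove (h : List (Move j)) : ∃ mv, P h → h.length < 2 * j * (2 * m + 1) →
      legalMove j m h mv ∧ I (mv :: h) := by
    by_cases hP : P h ∧ h.length < 2 * j * (2 * m + 1)
    · obtain ⟨mv, hmv⟩ := h_move h hP.1 hP.2
      exact ⟨mv, fun _ _ ↦ hmv⟩
    · exact ⟨(true, ⟨0, by omega⟩), fun h1 h2 ↦ absurd ⟨h1, h2⟩ hP⟩
  choose s1 hs1 using hmove
  refine ⟨s1, fun s2 hp2 ↦ ?_⟩
  have hinv (n : ℕ) (hn : n ≤ 2 * j * (2 * m + 1)) :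
      (n % 2 = 0 → P (hist j s1 s2 n)) ∧ (n % 2 = 1 → I (hist j s1 s2 n)) := by
    induction n with
    | zero => exact ⟨fun _ ↦ h_nil, by simp⟩
    | succ n ih =>
      obtain ⟨ihP, ihI⟩ := ih (by omega)
      constructor <;> intro hparity
      · have hodd : n % 2 = 1 := by omega
        simpa [hist, hodd] using h_reply _ _ (ihI hodd) (hp2 n hn hodd)
      · have heven : n % 2 = 0 := by omega
        simpa [hist, heven] using (hs1 _ (ihP heven) (by rwa [length_hist])).2
  refine ⟨fun n hn heven ↦ (hs1 _ ((hinv n hn.le).1 heven) (by rwa [length_hist])).1, ?_⟩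
  exact (hinv _ le_rfl).1 (by rw [mul_assoc, Nat.mul_mod_right])

/-- The invariant at Player 1's turns: white has already decided `j` bins, in which case any legal
move will do, or there is a suitable reply. -/
def Answerable (m : ℕ) (h : List (Move j)) : Prop :=
  Feasible m h ∧ ((position h).Won j m ∨ ∃ y, (position h).IsReply j m y)

/-- The invariant at Player 2's turns: a legally reached position which is safe for Player 1. -/
def Secured (m : ℕ) (h : List (Move j)) : Prop :=
  Feasible m h ∧ (position h).Safe j m

theorem answerable_nil (hj : 0 < j) (hm : 2 * j ≤ m + 3) : Answerable m ([] : List (Move j)) :=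
  ⟨feasible_nil, .inr ⟨⟨0, by omega⟩, Position.isReply_of_empty hj hm rfl rfl _⟩⟩

theorem Answerable.exists_secured_cons (hh : Answerable m h)
    (hlen : h.length < 2 * j * (2 * m + 1)) : ∃ mv, legalMove j m h mv ∧ Secured m (mv :: h) := by
  obtain ⟨hfeas, hwon | ⟨y, hwhite, hroom, hsafe⟩⟩ := hh
  · obtain ⟨mv, hmv⟩ := exists_legalMove_of_length_lt hlen
    exact ⟨mv, hmv, hfeas.cons hmv, .inl (position_cons h mv ▸ hwon.addBall mv.1 mv.2)⟩
  · have hlegal : legalMove j m h (true, y) :=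
      ⟨(countP_color_true h).trans_lt hwhite, (countP_bin h y).trans_lt hroom⟩
    exact ⟨_, hlegal, hfeas.cons hlegal, position_cons h (true, y) ▸ hsafe⟩

theorem Secured.answerable_cons (hm : 2 * j ≤ m + 3) (hh : Secured m h) (hmv : legalMove j m h mv) :
    Answerable m (mv :: h) := by
  have hfeas := hh.1.cons hmv
  have hcap := hfeas.white_add_black_le
  rw [position_cons] at hcap
  refine ⟨hfeas, ?_⟩
  rw [position_cons]
  exact hh.2.won_or_exists_isReply hm (by simp) hcap

theorem Answerable.won_of_length (hh : Answerable m h)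
    (hlen : h.length = 2 * j * (2 * m + 1)) : (position h).Won j m := by
  refine hh.2.resolve_right fun ⟨_, hwhite, _⟩ ↦ ?_
  exact hwhite.ne (hh.1.sum_white_eq_of_length hlen)

end History

theorem player1_forces_tie_general (j m : ℕ) (hj : 0 < j) (hm : 2 * j ≤ m + 3) :
    ∃ s1 : Strat j, ∀ s2 : Strat j,
      p2Legal j m s1 s2 →
      p1Legal j m s1 s2 ∧
      j ≤ majWhiteCount j m (finalHist j m s1 s2) := by
  obtain ⟨s1, hs1⟩ := exists_strat_of_invariant hj (answerable_nil hj hm)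
    (fun _ ↦ Answerable.exists_secured_cons) (fun _ _ ↦ Secured.answerable_cons hm)
  refine ⟨s1, fun s2 hp2 ↦ ?_⟩
  obtain ⟨hlegal, hfinal⟩ := hs1 s2 hp2
  exact ⟨hlegal, hfinal.won_of_length (length_hist s1 s2 _)⟩

/-- In the `(j,m)`-balanced redistricting game with `m > 14*j`,
Player 1 can force a tie: Player 1 has a strategy such that against any legally
playing Player 2, Player 1's moves are all legal and at least `j` of the `2*j`
bins end up majority-white. -/
theorem player1_forces_tie (j m : ℕ) (hj : 0 < j) (hm : 14*j < m) :
    ∃ s1 : Strat j, ∀ s2 : Strat j,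
      p2Legal j m s1 s2 →
      p1Legal j m s1 s2 ∧
      j ≤ majWhiteCount j m (finalHist j m s1 s2) :=
  player1_forces_tie_general j m hj (by omega)
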